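/- For the Freund manifold with the above diagonal Fisher metric, the α-scalar curvature is constant equal to −3(α²−1)/2; in particular the scalar curvature of the Levi-Civita connection (α=0) is 3/2. -/

import Mathlib

open MeasureTheory Real

/-- The Freund bivariate mixture exponential density. -/
noncomputable def freund (a1 b1 a2 b2 : ℝ) (x y : ℝ) : ℝ :=
  if 0 < x ∧ x < y then a1 * b2 * Real.exp (-b2 * y - (a1 + a2 - b2) * x)
  else if 0 < y ∧ y < x then a2 * b1 * Real.exp (-b1 * x - (a1 + a2 - b1) * y)
  else 0

/-- Partial derivative in the `i`-th parameter. -/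
noncomputable def pd (i : Fin 4) (F : (Fin 4 → ℝ) → ℝ) (p : Fin 4 → ℝ) : ℝ :=
  deriv (fun t => F (Function.update p i t)) (p i)

/-- Log-likelihood as a function of the parameters `(α₁, β₁, α₂, β₂)`. -/
noncomputable def ll (x y : ℝ) (p : Fin 4 → ℝ) : ℝ :=
  Real.log (freund (p 0) (p 1) (p 2) (p 3) x y)

/-- The Fisher information metric of the Freund manifold (diagonal form). -/
noncomputable def met (p : Fin 4 → ℝ) : Matrix (Fin 4) (Fin 4) ℝ :=
  Matrix.diagonal
    ![1 / ((p 0) ^ 2 + p 0 * p 2),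
      p 2 / ((p 1) ^ 2 * (p 0 + p 2)),
      1 / ((p 2) ^ 2 + p 0 * p 2),
      p 0 / ((p 3) ^ 2 * (p 0 + p 2))]

/-- Christoffel symbols of the α-connection (lowered indices):
`Γ^{(α)}_{ij,k} = E[(∂ᵢ∂ⱼ log f)(∂ₖ log f)] + ((1-α)/2) E[(∂ᵢ log f)(∂ⱼ log f)(∂ₖ log f)]`. -/
noncomputable def chLow (al : ℝ) (i j k : Fin 4) (p : Fin 4 → ℝ) : ℝ :=
  ∫ x in Set.Ioi (0:ℝ), ∫ y in Set.Ioi (0:ℝ),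
    (pd i (pd j (ll x y)) p * pd k (ll x y) p +
      (1 - al) / 2 * (pd i (ll x y) p * pd j (ll x y) p * pd k (ll x y) p)) *
        freund (p 0) (p 1) (p 2) (p 3) x y

/-- Christoffel symbols of the α-connection with an upper index. -/
noncomputable def chUp (al : ℝ) (h i j : Fin 4) (p : Fin 4 → ℝ) : ℝ :=
  ∑ k : Fin 4, (met p)⁻¹ h k * chLow al i j k p

/-- Curvature tensor `R^h_{ijk}` of the α-connection. -/
noncomputable def riem (al : ℝ) (h i j k : Fin 4) (p : Fin 4 → ℝ) : ℝ :=
  pd i (chUp al h j k) p - pd j (chUp al h i k) p +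
    ∑ l : Fin 4, (chUp al h i l p * chUp al l j k p - chUp al h j l p * chUp al l i k p)

/-- α-Ricci tensor: contraction of the α-curvature tensor. -/
noncomputable def ricci (al : ℝ) (j k : Fin 4) (p : Fin 4 → ℝ) : ℝ :=
  ∑ h : Fin 4, riem al h h j k p

/-- α-scalar curvature: full contraction `g^{jk} R^{(α)}_{jk}`. -/
noncomputable def scalarCurv (al : ℝ) (p : Fin 4 → ℝ) : ℝ :=
  ∑ j : Fin 4, ∑ k : Fin 4, (met p)⁻¹ j k * ricci al j k p


/-- The open quadrant. -/
def quad : Set (ℝ × ℝ) := Set.Ioi (0:ℝ) ×ˢ Set.Ioi (0:ℝ)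

lemma quad_meas : MeasurableSet quad := measurableSet_Ioi.prod measurableSet_Ioi

/-- Splitting the integral over the quadrant along the diagonal. -/
lemma split_integral (gA gB : ℝ × ℝ → ℝ) (hA : IntegrableOn gA quad) (hB : IntegrableOn gB quad)
    (F : ℝ → ℝ → ℝ) (h1 : ∀ x y, 0 < x → x < y → F x y = gA (x, y - x))
    (h2 : ∀ x y, 0 < y → y < x → F x y = gB (y, x - y)) (h3 : ∀ x, F x x = 0) :
    ∫ x in Set.Ioi (0:ℝ), ∫ y in Set.Ioi (0:ℝ), F x y
      = (∫ z in quad, gA z) + ∫ z in quad, gB z := by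
  have mA := measurePreserving_prod_sub (volume : Measure ℝ) (volume : Measure ℝ)
  have mB := measurePreserving_prod_sub_swap (volume : Measure ℝ) (volume : Measure ℝ)
  have iA : Integrable (quad.indicator gA) ((volume : Measure ℝ).prod volume) :=
    (integrable_indicator_iff quad_meas).2 hA
  have iB : Integrable (quad.indicator gB) ((volume : Measure ℝ).prod volume) :=
    (integrable_indicator_iff quad_meas).2 hB
  have jA : Integrable (fun z : ℝ × ℝ => quad.indicator gA (z.1, z.2 - z.1))
      ((volume : Measure ℝ).prod volume) := mA.integrable_comp_of_integrable iA
  have jB : Integrable (fun z : ℝ × ℝ => quad.indicator gB (z.2, z.1 - z.2))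
      ((volume : Measure ℝ).prod volume) := mB.integrable_comp_of_integrable iB
  have eA : ∫ z, quad.indicator gA (z.1, z.2 - z.1) ∂((volume : Measure ℝ).prod volume)
      = ∫ z in quad, gA z := by
    rw [← integral_indicator quad_meas]
    have h := integral_map (μ := (volume : Measure ℝ).prod volume) mA.measurable.aemeasurable
      (f := quad.indicator gA) (by rw [mA.map_eq]; exact iA.aestronglyMeasurable)
    rw [mA.map_eq] at h
    exact h.symm
  have eB : ∫ z, quad.indicator gB (z.2, z.1 - z.2) ∂((volume : Measure ℝ).prod volume)
      = ∫ z in quad, gB z := by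
    rw [← integral_indicator quad_meas]
    have h := integral_map (μ := (volume : Measure ℝ).prod volume) mB.measurable.aemeasurable
      (f := quad.indicator gB) (by rw [mB.map_eq]; exact iB.aestronglyMeasurable)
    rw [mB.map_eq] at h
    exact h.symm
  rw [← eA, ← eB, ← integral_add jA jB, integral_prod (fun z : ℝ × ℝ => quad.indicator gA (z.1, z.2 - z.1) +
      quad.indicator gB (z.2, z.1 - z.2)) (jA.add jB),
    ← integral_indicator measurableSet_Ioi]
  congr 1
  funext x
  by_cases hx : 0 < x
  · rw [Set.indicator_of_mem (show x ∈ Set.Ioi 0 from hx), ← integral_indicator measurableSet_Ioi]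
    congr 1
    funext y
    by_cases hy : 0 < y
    · rw [Set.indicator_of_mem (show y ∈ Set.Ioi 0 from hy)]
      rcases lt_trichotomy x y with h | h | h
      · rw [h1 x y hx h]
        simp [quad, Set.indicator, hx, hy, h, not_lt.2 h.le]
      · subst h
        rw [h3]
        simp [quad, Set.indicator]
      · rw [h2 x y hy h]
        simp [quad, Set.indicator, hx, hy, h, not_lt.2 h.le]
    · rw [Set.indicator_of_notMem (show y ∉ Set.Ioi 0 from hy)]
      have : ¬ (x < y) := fun h => hy (hx.trans h)
      simp [quad, Set.indicator, hy, this]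
  · rw [Set.indicator_of_notMem (show x ∉ Set.Ioi 0 from hx)]
    symm
    have : ∀ y, quad.indicator gA (x, y - x) + quad.indicator gB (y, x - y) = 0 := by
      intro y
      have : ¬ (0 < y ∧ y < x) := fun h => hx (h.1.trans h.2)
      simp [quad, Set.indicator, hx, this]
    simp [this]

/-- One-dimensional moments. -/
lemma mom1 (s : ℝ) (hs : 0 < s) (n : ℕ) :
    IntegrableOn (fun u : ℝ => u ^ n * Real.exp (-s * u)) (Set.Ioi 0) ∧
    ∫ u in Set.Ioi (0:ℝ), u ^ n * Real.exp (-s * u) = n.factorial / s ^ (n + 1) := by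
  have hn : (0:ℝ) < n + 1 := by positivity
  have h := Real.integral_rpow_mul_exp_neg_mul_Ioi hn hs
  have e : ∫ u in Set.Ioi (0:ℝ), u ^ n * Real.exp (-s * u) = n.factorial / s ^ (n + 1) := by
    have h' : (1 / s) ^ ((n:ℝ) + 1) * Real.Gamma ((n:ℝ) + 1) = n.factorial / s ^ (n + 1) := by
      rw [Real.Gamma_nat_eq_factorial, show ((n:ℝ) + 1) = ((n + 1 : ℕ) : ℝ) by push_cast; ring,
        Real.rpow_natCast]
      rw [one_div, inv_pow, div_eq_mul_inv, mul_comm]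
    rw [← h', ← h]
    refine setIntegral_congr_fun measurableSet_Ioi fun u hu => ?_
    simp
  refine ⟨?_, e⟩
  by_contra hc
  rw [integral_undef hc] at e
  have : (0:ℝ) < n.factorial / s ^ (n + 1) := by positivity
  linarith

/-- `f` times the exponential weight is integrable with the given integral. -/
def HasE (s b : ℝ) (f : ℝ × ℝ → ℝ) (r : ℝ) : Prop :=
  IntegrableOn (fun z => f z * Real.exp (-s * z.1 - b * z.2)) quad ∧
    ∫ z in quad, f z * Real.exp (-s * z.1 - b * z.2) = r

lemma HasE.add {s b : ℝ} {f g : ℝ × ℝ → ℝ} {q r : ℝ} (hf : HasE s b f q) (hg : HasE s b g r) :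
    HasE s b (fun z => f z + g z) (q + r) := by
  have e : (fun z : ℝ × ℝ => (f z + g z) * Real.exp (-s * z.1 - b * z.2)) =
      fun z => f z * Real.exp (-s * z.1 - b * z.2) + g z * Real.exp (-s * z.1 - b * z.2) := by
    funext z; ring
  unfold HasE
  rw [e]
  exact ⟨hf.1.add hg.1, by rw [integral_add hf.1 hg.1, hf.2, hg.2]⟩

lemma HasE.mono (s b : ℝ) (hs : 0 < s) (hb : 0 < b) (c : ℝ) (m n : ℕ) :
    HasE s b (fun z => c * (z.1 ^ m * z.2 ^ n))
      (c * (m.factorial / s ^ (m + 1) * (n.factorial / b ^ (n + 1)))) := by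
  have e : (fun z : ℝ × ℝ => c * (z.1 ^ m * z.2 ^ n) * Real.exp (-s * z.1 - b * z.2)) =
      fun z => c * ((z.1 ^ m * Real.exp (-s * z.1)) * (z.2 ^ n * Real.exp (-b * z.2))) := by
    funext z
    rw [show -s * z.1 - b * z.2 = -s * z.1 + -b * z.2 by ring, Real.exp_add]; ring
  obtain ⟨i1, e1⟩ := mom1 s hs m
  obtain ⟨i2, e2⟩ := mom1 b hb n
  have hm : (volume : Measure (ℝ × ℝ)).restrict quad =
      ((volume : Measure ℝ).restrict (Set.Ioi 0)).prod ((volume : Measure ℝ).restrict (Set.Ioi 0)) := by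
    rw [Measure.prod_restrict]; rfl
  unfold HasE IntegrableOn
  rw [e, hm]
  refine ⟨(Integrable.mul_prod i1 i2).const_mul c, ?_⟩
  rw [integral_const_mul, integral_prod_mul (fun u : ℝ => u ^ m * Real.exp (-s * u))
    (fun u : ℝ => u ^ n * Real.exp (-b * u)), e1, e2]

/-- Expectation of a cubic in two independent exponentials. -/
lemma HasE.cubic (s b : ℝ) (hs : 0 < s) (hb : 0 < b)
    (k00 k10 k01 k20 k11 k02 k30 k21 k12 k03 : ℝ) (f : ℝ × ℝ → ℝ)
    (hf : ∀ z, f z = k00 + k10 * z.1 + k01 * z.2 + k20 * z.1 ^ 2 + k11 * (z.1 * z.2)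
      + k02 * z.2 ^ 2 + k30 * z.1 ^ 3 + k21 * (z.1 ^ 2 * z.2) + k12 * (z.1 * z.2 ^ 2)
      + k03 * z.2 ^ 3) :
    HasE s b f ((k00 + k10 / s + k01 / b + 2 * k20 / s ^ 2 + k11 / (s * b) + 2 * k02 / b ^ 2
      + 6 * k30 / s ^ 3 + 2 * k21 / (s ^ 2 * b) + 2 * k12 / (s * b ^ 2) + 6 * k03 / b ^ 3)
      / (s * b)) := by
  have M := HasE.mono s b hs hb
  have H := (((((((((M k00 0 0).add (M k10 1 0)).add (M k01 0 1)).add (M k20 2 0)).add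
    (M k11 1 1)).add (M k02 0 2)).add (M k30 3 0)).add (M k21 2 1)).add (M k12 1 2)).add
    (M k03 0 3)
  convert H using 1
  · funext z
    rw [hf]; ring
  · simp only [Nat.factorial]
    field_simp
    push_cast
    ring

lemma pd_congr (i : Fin 4) (F G : (Fin 4 → ℝ) → ℝ) (p : Fin 4 → ℝ) (hp : ∀ i, 0 < p i)
    (h : ∀ q : Fin 4 → ℝ, (∀ i, 0 < q i) → F q = G q) : pd i F p = pd i G p := by
  unfold pd
  apply Filter.EventuallyEq.deriv_eq
  filter_upwards [lt_mem_nhds (hp i)] with t ht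
  apply h
  intro k
  by_cases hk : k = i
  · subst hk; simpa using ht
  · simpa [Function.update_of_ne hk] using hp k

/-- Coefficients of the scores in the two regions. -/
noncomputable def cA (p : Fin 4 → ℝ) : Fin 4 → ℝ := ![1 / p 0, 0, 0, 1 / p 3]
noncomputable def cB (p : Fin 4 → ℝ) : Fin 4 → ℝ := ![0, 1 / p 1, 1 / p 2, 0]
def dd : Fin 4 → ℝ := ![-1, 0, -1, 0]
def eA : Fin 4 → ℝ := ![0, 0, 0, -1]
def eB : Fin 4 → ℝ := ![0, -1, 0, 0]

lemma ll_A (x y : ℝ) (hx : 0 < x) (hy : x < y) (q : Fin 4 → ℝ) (hq : ∀ i, 0 < q i) :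
    ll x y q = Real.log (q 0) + Real.log (q 3) - q 3 * (y - x) - (q 0 + q 2) * x := by
  unfold ll freund
  rw [if_pos ⟨hx, hy⟩, Real.log_mul (mul_pos (hq 0) (hq 3)).ne' (Real.exp_ne_zero _),
    Real.log_mul (hq 0).ne' (hq 3).ne', Real.log_exp]
  ring

lemma ll_B (x y : ℝ) (hx : 0 < y) (hy : y < x) (q : Fin 4 → ℝ) (hq : ∀ i, 0 < q i) :
    ll x y q = Real.log (q 2) + Real.log (q 1) - q 1 * (x - y) - (q 0 + q 2) * y := by
  unfold ll freund
  rw [if_neg (fun h => lt_asymm h.2 hy), if_pos ⟨hx, hy⟩,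
    Real.log_mul (mul_pos (hq 2) (hq 1)).ne' (Real.exp_ne_zero _),
    Real.log_mul (hq 2).ne' (hq 1).ne', Real.log_exp]
  ring

lemma hd_aux (c k m : ℝ) (r : ℝ) (hr : 0 < r) :
    HasDerivAt (fun t => k + c * Real.log t + m * t) (c * (1 / r) + m) r := by
  have h1 := (Real.hasDerivAt_log hr.ne').const_mul c
  have h2 := (hasDerivAt_id r).const_mul m
  have := (h1.const_add k).add h2
  exact this.congr_deriv (by rw [one_div, mul_one])

lemma pd_aux (i : Fin 4) (F : (Fin 4 → ℝ) → ℝ) (p : Fin 4 → ℝ) (hp : ∀ i, 0 < p i) (c k m : ℝ)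
    (h : ∀ t, F (Function.update p i t) = k + c * Real.log t + m * t) :
    pd i F p = c * (1 / p i) + m := by
  unfold pd
  rw [show (fun t => F (Function.update p i t)) = fun t => k + c * Real.log t + m * t from funext h]
  exact (hd_aux c k m _ (hp i)).deriv

lemma pd_ll_A (i : Fin 4) (x y : ℝ) (hx : 0 < x) (hy : x < y) (q : Fin 4 → ℝ)
    (hq : ∀ i, 0 < q i) : pd i (ll x y) q = cA q i + dd i * x + eA i * (y - x) := by
  rw [pd_congr i _ _ q hq (ll_A x y hx hy)]
  fin_cases i
  · refine (pd_aux 0 _ q hq 1 (Real.log (q 3) - q 3 * (y - x) - q 2 * x) (-x) ?_).trans ?_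
    · intro t; simp [Function.update]; ring
    · simp [cA, dd, eA]
  · refine (pd_aux 1 _ q hq 0 (Real.log (q 0) + Real.log (q 3) - q 3 * (y - x) - (q 0 + q 2) * x)
      0 ?_).trans ?_
    · intro t; simp [Function.update]
    · simp [cA, dd, eA]
  · refine (pd_aux 2 _ q hq 0 (Real.log (q 0) + Real.log (q 3) - q 3 * (y - x) - q 0 * x)
      (-x) ?_).trans ?_
    · intro t; simp [Function.update]; ring
    · simp [cA, dd, eA]
  · refine (pd_aux 3 _ q hq 1 (Real.log (q 0) - (q 0 + q 2) * x) (-(y - x)) ?_).trans ?_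
    · intro t; simp [Function.update]; ring
    · simp [cA, dd, eA]

lemma pd_ll_B (i : Fin 4) (x y : ℝ) (hx : 0 < y) (hy : y < x) (q : Fin 4 → ℝ)
    (hq : ∀ i, 0 < q i) : pd i (ll x y) q = cB q i + dd i * y + eB i * (x - y) := by
  rw [pd_congr i _ _ q hq (ll_B x y hx hy)]
  fin_cases i
  · refine (pd_aux 0 _ q hq 0 (Real.log (q 2) + Real.log (q 1) - q 1 * (x - y) - q 2 * y)
      (-y) ?_).trans ?_
    · intro t; simp [Function.update]; ring
    · simp [cB, dd, eB]
  · refine (pd_aux 1 _ q hq 1 (Real.log (q 2) - (q 0 + q 2) * y) (-(x - y)) ?_).trans ?_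
    · intro t; simp [Function.update]; ring
    · simp [cB, dd, eB]
  · refine (pd_aux 2 _ q hq 1 (Real.log (q 1) - q 1 * (x - y) - q 0 * y) (-y) ?_).trans ?_
    · intro t; simp [Function.update]; ring
    · simp [cB, dd, eB]
  · refine (pd_aux 3 _ q hq 0 (Real.log (q 2) + Real.log (q 1) - q 1 * (x - y) - (q 0 + q 2) * y)
      0 ?_).trans ?_
    · intro t; simp [Function.update]
    · simp [cB, dd, eB]

lemma pd_inv (i j : Fin 4) (p : Fin 4 → ℝ) (hp : ∀ i, 0 < p i) (k : ℝ) :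
    pd i (fun q => 1 / q j + k) p = if i = j then -(1 / p j) ^ 2 else 0 := by
  unfold pd
  by_cases h : i = j
  · subst h
    have := (hasDerivAt_inv (hp i).ne').add_const k
    simp only [Function.update_self, if_true, one_div]
    rw [this.deriv, inv_pow]
  · simp [Function.update_of_ne (Ne.symm h), h]

lemma pd_const (i : Fin 4) (p : Fin 4 → ℝ) (F : (Fin 4 → ℝ) → ℝ)
    (h : ∀ q r, F q = F r) : pd i F p = 0 := by
  unfold pd
  rw [show (fun t => F (Function.update p i t)) = fun _ => F p from funext fun t => h _ _]
  simp

lemma pd_pd_A (i j : Fin 4) (x y : ℝ) (hx : 0 < x) (hy : x < y) (q : Fin 4 → ℝ)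
    (hq : ∀ i, 0 < q i) : pd i (pd j (ll x y)) q = if i = j then -(cA q j) ^ 2 else 0 := by
  rw [pd_congr i _ _ q hq (pd_ll_A j x y hx hy)]
  simp only [add_assoc]
  fin_cases j
  · exact pd_inv i 0 q hq _
  · refine (pd_const i q _ (fun q r => by simp [cA])).trans ?_
    simp [cA]
  · refine (pd_const i q _ (fun q r => by simp [cA])).trans ?_
    simp [cA]
  · exact pd_inv i 3 q hq _

lemma pd_pd_B (i j : Fin 4) (x y : ℝ) (hx : 0 < y) (hy : y < x) (q : Fin 4 → ℝ)
    (hq : ∀ i, 0 < q i) : pd i (pd j (ll x y)) q = if i = j then -(cB q j) ^ 2 else 0 := by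
  rw [pd_congr i _ _ q hq (pd_ll_B j x y hx hy)]
  simp only [add_assoc]
  fin_cases j
  · refine (pd_const i q _ (fun q r => by simp [cB])).trans ?_
    simp [cB]
  · exact pd_inv i 1 q hq _
  · exact pd_inv i 2 q hq _
  · refine (pd_const i q _ (fun q r => by simp [cB])).trans ?_
    simp [cB]

/-- Closed form of the expectation on one region, for three linear forms `c + d u + e v`. -/
noncomputable def tri (s b D κ c1 d1 e1 c2 d2 e2 c3 d3 e3 : ℝ) : ℝ :=
  D * (c3 + d3 / s + e3 / b) + κ * (c1 * c2 * c3
    + (d1 * c2 * c3 + c1 * d2 * c3 + c1 * c2 * d3) / s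
    + (e1 * c2 * c3 + c1 * e2 * c3 + c1 * c2 * e3) / b
    + 2 * (d1 * d2 * c3 + d1 * c2 * d3 + c1 * d2 * d3) / s ^ 2
    + (d1 * e2 * c3 + d1 * c2 * e3 + c1 * d2 * e3 + e1 * d2 * c3 + e1 * c2 * d3 + c1 * e2 * d3)
      / (s * b)
    + 2 * (e1 * e2 * c3 + e1 * c2 * e3 + c1 * e2 * e3) / b ^ 2
    + 6 * (d1 * d2 * d3) / s ^ 3
    + 2 * (d1 * d2 * e3 + d1 * e2 * d3 + e1 * d2 * d3) / (s ^ 2 * b)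
    + 2 * (e1 * e2 * d3 + e1 * d2 * e3 + d1 * e2 * e3) / (s * b ^ 2)
    + 6 * (e1 * e2 * e3) / b ^ 3)

lemma HasE.tri (s b : ℝ) (hs : 0 < s) (hb : 0 < b) (K D κ c1 d1 e1 c2 d2 e2 c3 d3 e3 : ℝ) :
    HasE s b (fun z => (D * (c3 + d3 * z.1 + e3 * z.2) + κ * ((c1 + d1 * z.1 + e1 * z.2) *
      (c2 + d2 * z.1 + e2 * z.2) * (c3 + d3 * z.1 + e3 * z.2))) * K)
      (K / (s * b) * tri s b D κ c1 d1 e1 c2 d2 e2 c3 d3 e3) := by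
  have H := HasE.cubic s b hs hb
    (K * (D * c3 + κ * (c1 * c2 * c3)))
    (K * (D * d3 + κ * (d1 * c2 * c3 + c1 * d2 * c3 + c1 * c2 * d3)))
    (K * (D * e3 + κ * (e1 * c2 * c3 + c1 * e2 * c3 + c1 * c2 * e3)))
    (K * (κ * (d1 * d2 * c3 + d1 * c2 * d3 + c1 * d2 * d3)))
    (K * (κ * (d1 * e2 * c3 + d1 * c2 * e3 + c1 * d2 * e3 + e1 * d2 * c3 + e1 * c2 * d3
      + c1 * e2 * d3)))
    (K * (κ * (e1 * e2 * c3 + e1 * c2 * e3 + c1 * e2 * e3)))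
    (K * (κ * (d1 * d2 * d3)))
    (K * (κ * (d1 * d2 * e3 + d1 * e2 * d3 + e1 * d2 * d3)))
    (K * (κ * (e1 * e2 * d3 + e1 * d2 * e3 + d1 * e2 * e3)))
    (K * (κ * (e1 * e2 * e3)))
    (fun z => (D * (c3 + d3 * z.1 + e3 * z.2) + κ * ((c1 + d1 * z.1 + e1 * z.2) *
      (c2 + d2 * z.1 + e2 * z.2) * (c3 + d3 * z.1 + e3 * z.2))) * K) (by intro z; ring)
  convert H using 1
  unfold _root_.tri
  ring

lemma freund_A (a1 b1 a2 b2 x y : ℝ) (hx : 0 < x) (hy : x < y) :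
    freund a1 b1 a2 b2 x y = a1 * b2 * Real.exp (-b2 * y - (a1 + a2 - b2) * x) := by
  unfold freund
  rw [if_pos ⟨hx, hy⟩]

lemma freund_B (a1 b1 a2 b2 x y : ℝ) (hx : 0 < y) (hy : y < x) :
    freund a1 b1 a2 b2 x y = a2 * b1 * Real.exp (-b1 * x - (a1 + a2 - b1) * y) := by
  unfold freund
  rw [if_neg (fun h => lt_asymm h.2 hy), if_pos ⟨hx, hy⟩]

lemma chLow_eq (al : ℝ) (i j k : Fin 4) (p : Fin 4 → ℝ) (hp : ∀ i, 0 < p i) :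
    chLow al i j k p =
      p 0 / (p 0 + p 2) * tri (p 0 + p 2) (p 3) (if i = j then -(cA p j) ^ 2 else 0)
        ((1 - al) / 2) (cA p i) (dd i) (eA i) (cA p j) (dd j) (eA j) (cA p k) (dd k) (eA k)
      + p 2 / (p 0 + p 2) * tri (p 0 + p 2) (p 1) (if i = j then -(cB p j) ^ 2 else 0)
        ((1 - al) / 2) (cB p i) (dd i) (eB i) (cB p j) (dd j) (eB j) (cB p k) (dd k) (eB k) := by
  have hs : 0 < p 0 + p 2 := add_pos (hp 0) (hp 2)
  have HA := HasE.tri (p 0 + p 2) (p 3) hs (hp 3) (p 0 * p 3)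
    (if i = j then -(cA p j) ^ 2 else 0)
    ((1 - al) / 2) (cA p i) (dd i) (eA i) (cA p j) (dd j) (eA j) (cA p k) (dd k) (eA k)
  have HB := HasE.tri (p 0 + p 2) (p 1) hs (hp 1) (p 2 * p 1)
    (if i = j then -(cB p j) ^ 2 else 0)
    ((1 - al) / 2) (cB p i) (dd i) (eB i) (cB p j) (dd j) (eB j) (cB p k) (dd k) (eB k)
  have h := split_integral _ _ HA.1 HB.1 (fun x y =>
    (pd i (pd j (ll x y)) p * pd k (ll x y) p +
      (1 - al) / 2 * (pd i (ll x y) p * pd j (ll x y) p * pd k (ll x y) p)) *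
        freund (p 0) (p 1) (p 2) (p 3) x y) ?_ ?_ ?_
  · unfold chLow
    rw [h, HA.2, HB.2]
    have h3 := (hp 3).ne'
    have h1 := (hp 1).ne'
    congr 2
    · field_simp
    · field_simp
  · intro x y hx hy
    simp only
    rw [pd_pd_A i j x y hx hy p hp, pd_ll_A i x y hx hy p hp, pd_ll_A j x y hx hy p hp,
      pd_ll_A k x y hx hy p hp]
    rw [freund_A _ _ _ _ _ _ hx hy, show -p 3 * y - (p 0 + p 2 - p 3) * x
      = -(p 0 + p 2) * x - p 3 * (y - x) by ring]
    ring
  · intro x y hx hy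
    simp only
    rw [pd_pd_B i j x y hx hy p hp, pd_ll_B i x y hx hy p hp, pd_ll_B j x y hx hy p hp,
      pd_ll_B k x y hx hy p hp]
    rw [freund_B _ _ _ _ _ _ hx hy,
      show -p 1 * x - (p 0 + p 2 - p 1) * y
      = -(p 0 + p 2) * y - p 1 * (x - y) by ring]
    ring
  · intro x
    simp [freund]

/-- Diagonal of the inverse metric. -/
noncomputable def ginv (p : Fin 4 → ℝ) : Fin 4 → ℝ :=
  ![p 0 * (p 0 + p 2), (p 1) ^ 2 * (p 0 + p 2) / p 2, p 2 * (p 0 + p 2),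
    (p 3) ^ 2 * (p 0 + p 2) / p 0]

lemma met_inv (p : Fin 4 → ℝ) (hp : ∀ i, 0 < p i) :
    (met p)⁻¹ = Matrix.diagonal (ginv p) := by
  apply Matrix.inv_eq_right_inv
  unfold met
  rw [Matrix.diagonal_mul_diagonal, ← Matrix.diagonal_one]
  congr 1
  have h0 := hp 0
  have h1 := hp 1
  have h2 := hp 2
  have h3 := hp 3
  funext i
  fin_cases i <;> simp [ginv] <;> field_simp <;> ring

lemma chUp_eq (al : ℝ) (h i j : Fin 4) (p : Fin 4 → ℝ) (hp : ∀ i, 0 < p i) :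
    chUp al h i j p = ginv p h * chLow al i j h p := by
  unfold chUp
  rw [met_inv p hp]
  simp [Matrix.diagonal_apply]

lemma chUp_symm (al : ℝ) (h i j : Fin 4) (p : Fin 4 → ℝ) (hp : ∀ i, 0 < p i) :
    chUp al h i j p = chUp al h j i p := by
  rw [chUp_eq _ _ _ _ _ hp, chUp_eq _ _ _ _ _ hp, chLow_eq _ _ _ _ _ hp, chLow_eq _ _ _ _ _ hp]
  by_cases hij : i = j
  · subst hij; rfl
  · simp only [hij, Ne.symm hij, if_false, tri]
    ring

lemma scalar_eq (al : ℝ) (p : Fin 4 → ℝ) (hp : ∀ i, 0 < p i) :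
    scalarCurv al p = ∑ j, ginv p j * ∑ h, riem al h h j j p := by
  unfold scalarCurv ricci
  rw [met_inv p hp]
  simp [Matrix.diagonal_apply]

/-- Christoffel symbols in closed form, `κ = (1 - α) / 2`. -/
noncomputable def tab (κ : ℝ) (h i j : Fin 4) (p : Fin 4 → ℝ) : ℝ :=
  (![
     ![![(-p 2 + κ * (p 2 - 2 * p 0)) / (p 0 * (p 0 + p 2)), 0, -κ / (p 0 + p 2), 0],
       ![0, (1 - κ) * (p 0 * p 2) / (p 1 ^ 2 * (p 0 + p 2)), 0, 0],
       ![-κ / (p 0 + p 2), 0, (1 - κ) * p 0 / (p 2 * (p 0 + p 2)), 0],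
       ![0, 0, 0, -(1 - κ) * (p 0 * p 2) / (p 3 ^ 2 * (p 0 + p 2))]],
     ![![0, -κ / (p 0 + p 2), 0, 0],
       ![-κ / (p 0 + p 2), -2 * κ / p 1, κ * p 0 / (p 2 * (p 0 + p 2)), 0],
       ![0, κ * p 0 / (p 2 * (p 0 + p 2)), 0, 0],
       ![0, 0, 0, 0]],
     ![![(1 - κ) * p 2 / (p 0 * (p 0 + p 2)), 0, -κ / (p 0 + p 2), 0],
       ![0, -(1 - κ) * (p 0 * p 2) / (p 1 ^ 2 * (p 0 + p 2)), 0, 0],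
       ![-κ / (p 0 + p 2), 0, (-p 0 + κ * (p 0 - 2 * p 2)) / (p 2 * (p 0 + p 2)), 0],
       ![0, 0, 0, (1 - κ) * (p 0 * p 2) / (p 3 ^ 2 * (p 0 + p 2))]],
     ![![0, 0, 0, κ * p 2 / (p 0 * (p 0 + p 2))],
       ![0, 0, 0, 0],
       ![0, 0, 0, -κ / (p 0 + p 2)],
       ![κ * p 2 / (p 0 * (p 0 + p 2)), 0, -κ / (p 0 + p 2), -2 * κ / p 3]]] :
    Fin 4 → Fin 4 → Fin 4 → ℝ) h i j

set_option maxHeartbeats 4000000 in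
lemma chUp_tab (al : ℝ) (h i j : Fin 4) (p : Fin 4 → ℝ) (hp : ∀ i, 0 < p i) :
    chUp al h i j p = tab ((1 - al) / 2) h i j p := by
  rw [chUp_eq _ _ _ _ _ hp, chLow_eq _ _ _ _ _ hp]
  have h0 := (hp 0).ne'
  have h1 := (hp 1).ne'
  have h2 := (hp 2).ne'
  have h3 := (hp 3).ne'
  have hs : p 0 + p 2 ≠ 0 := (add_pos (hp 0) (hp 2)).ne'
  generalize (1 - al) / 2 = κ
  unfold tab ginv cA cB dd eA eB tri
  generalize p 0 = a1 at *
  generalize p 1 = b1 at *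
  generalize p 2 = a2 at *
  generalize p 3 = b2 at *
  fin_cases h <;> fin_cases i <;> fin_cases j <;> simp <;> field_simp <;>
    first | ring1 | (ring_nf; simp)

lemma riem_diag (al : ℝ) (h k : Fin 4) (p : Fin 4 → ℝ) : riem al h h h k p = 0 := by
  simp [riem]

/-- Derivatives of the closed form along coordinate directions. -/
lemma pd_of (i : Fin 4) (F : (Fin 4 → ℝ) → ℝ) (p : Fin 4 → ℝ) (G : ℝ → ℝ) (r : ℝ)
    (h : ∀ t, F (Function.update p i t) = G t) (hG : HasDerivAt G r (p i)) : pd i F p = r := by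
  unfold pd
  rw [show (fun t => F (Function.update p i t)) = G from funext h]
  exact hG.deriv

/-- Quotients of linear by quadratic polynomials. -/
lemma hd_quot (n0 n1 d0 d1 d2 t : ℝ) (hd : d0 + d1 * t + d2 * t ^ 2 ≠ 0) :
    HasDerivAt (fun t => (n0 + n1 * t) / (d0 + d1 * t + d2 * t ^ 2))
      ((n1 * (d0 + d1 * t + d2 * t ^ 2) - (n0 + n1 * t) * (d1 + 2 * d2 * t))
        / (d0 + d1 * t + d2 * t ^ 2) ^ 2) t := by
  have h1 : HasDerivAt (fun t : ℝ => n0 + n1 * t) n1 t := by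
    simpa using ((hasDerivAt_id t).const_mul n1).const_add n0
  have h2 : HasDerivAt (fun t : ℝ => d0 + d1 * t + d2 * t ^ 2) (d1 + 2 * d2 * t) t := by
    have := (((hasDerivAt_id t).const_mul d1).const_add d0).add
      ((hasDerivAt_pow 2 t).const_mul d2)
    exact this.congr_deriv (by push_cast; ring)
  exact h1.div h2 hd

lemma pd_quot (i : Fin 4) (F : (Fin 4 → ℝ) → ℝ) (p : Fin 4 → ℝ) (n0 n1 d0 d1 d2 r : ℝ)
    (hd : d0 + d1 * p i + d2 * p i ^ 2 ≠ 0)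
    (h : ∀ t, F (Function.update p i t) = (n0 + n1 * t) / (d0 + d1 * t + d2 * t ^ 2))
    (hr : (n1 * (d0 + d1 * p i + d2 * p i ^ 2) - (n0 + n1 * p i) * (d1 + 2 * d2 * p i))
        / (d0 + d1 * p i + d2 * p i ^ 2) ^ 2 = r) : pd i F p = r := by
  rw [← hr]
  exact pd_of i F p _ _ h (hd_quot n0 n1 d0 d1 d2 _ hd)

lemma tab_zero (κ : ℝ) (i h j k : Fin 4) (p : Fin 4 → ℝ)
    (hz : ∀ q, tab κ h j k q = 0) : pd i (tab κ h j k) p = 0 :=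
  pd_const i p _ fun q r => by rw [hz, hz]

lemma riem_tab (al : ℝ) (h i j k : Fin 4) (p : Fin 4 → ℝ) (hp : ∀ i, 0 < p i) :
    riem al h i j k p = pd i (tab ((1 - al) / 2) h j k) p - pd j (tab ((1 - al) / 2) h i k) p +
    ∑ l : Fin 4, (tab ((1 - al) / 2) h i l p * tab ((1 - al) / 2) l j k p
      - tab ((1 - al) / 2) h j l p * tab ((1 - al) / 2) l i k p) := by
  unfold riem
  rw [pd_congr i _ _ p hp (chUp_tab al h j k), pd_congr j _ _ p hp (chUp_tab al h i k)]
  simp only [chUp_tab al _ _ _ p hp]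

section derivs
variable (κ : ℝ) (p : Fin 4 → ℝ)

lemma d2_200 (hp : ∀ i, 0 < p i) : pd 2 (tab κ 2 0 0) p = (1 - κ) / (p 0 + p 2) ^ 2 := by
  have h0 := hp 0
  have h2 := hp 2
  refine pd_quot 2 _ p 0 (1 - κ) (p 0 ^ 2) (p 0) 0 _ (by positivity) (fun t => ?_) ?_
  · simp [tab, Function.update]; ring
  · field_simp; ring

lemma d0_022 (hp : ∀ i, 0 < p i) : pd 0 (tab κ 0 2 2) p = (1 - κ) / (p 0 + p 2) ^ 2 := by
  have h0 := hp 0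
  have h2 := hp 2
  refine pd_quot 0 _ p 0 (1 - κ) (p 2 ^ 2) (p 2) 0 _ (by positivity) (fun t => ?_) ?_
  · simp [tab, Function.update]; ring
  · field_simp; ring

lemma d0_011 (hp : ∀ i, 0 < p i) :
    pd 0 (tab κ 0 1 1) p = (1 - κ) * p 2 ^ 2 / (p 1 ^ 2 * (p 0 + p 2) ^ 2) := by
  have h0 := hp 0
  have h1 := hp 1
  have h2 := hp 2
  refine pd_quot 0 _ p 0 ((1 - κ) * p 2) (p 1 ^ 2 * p 2) (p 1 ^ 2) 0 _ (by positivity)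
    (fun t => ?_) ?_
  · simp [tab, Function.update]; ring
  · field_simp; ring

lemma d2_211 (hp : ∀ i, 0 < p i) :
    pd 2 (tab κ 2 1 1) p = -(1 - κ) * p 0 ^ 2 / (p 1 ^ 2 * (p 0 + p 2) ^ 2) := by
  have h0 := hp 0
  have h1 := hp 1
  have h2 := hp 2
  refine pd_quot 2 _ p 0 (-(1 - κ) * p 0) (p 1 ^ 2 * p 0) (p 1 ^ 2) 0 _ (by positivity)
    (fun t => ?_) ?_
  · simp [tab, Function.update]; ring
  · field_simp; ring

lemma d0_033 (hp : ∀ i, 0 < p i) :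
    pd 0 (tab κ 0 3 3) p = -(1 - κ) * p 2 ^ 2 / (p 3 ^ 2 * (p 0 + p 2) ^ 2) := by
  have h0 := hp 0
  have h1 := hp 3
  have h2 := hp 2
  refine pd_quot 0 _ p 0 (-(1 - κ) * p 2) (p 3 ^ 2 * p 2) (p 3 ^ 2) 0 _ (by positivity)
    (fun t => ?_) ?_
  · simp [tab, Function.update]; ring
  · field_simp; ring

lemma d2_233 (hp : ∀ i, 0 < p i) :
    pd 2 (tab κ 2 3 3) p = (1 - κ) * p 0 ^ 2 / (p 3 ^ 2 * (p 0 + p 2) ^ 2) := by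
  have h0 := hp 0
  have h1 := hp 3
  have h2 := hp 2
  refine pd_quot 2 _ p 0 ((1 - κ) * p 0) (p 3 ^ 2 * p 0) (p 3 ^ 2) 0 _ (by positivity)
    (fun t => ?_) ?_
  · simp [tab, Function.update]; ring
  · field_simp; ring

lemma d0_s (hp : ∀ i, 0 < p i) (F : (Fin 4 → ℝ) → ℝ) (hF : ∀ q, F q = -κ / (q 0 + q 2)) :
    pd 0 F p = κ / (p 0 + p 2) ^ 2 := by
  have h0 := hp 0
  have h2 := hp 2
  refine pd_quot 0 _ p (-κ) 0 (p 2) 1 0 _ (by positivity) (fun t => ?_) ?_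
  · rw [hF]; simp [Function.update]; ring
  · field_simp; ring

lemma d2_s (hp : ∀ i, 0 < p i) (F : (Fin 4 → ℝ) → ℝ) (hF : ∀ q, F q = -κ / (q 0 + q 2)) :
    pd 2 F p = κ / (p 0 + p 2) ^ 2 := by
  have h0 := hp 0
  have h2 := hp 2
  refine pd_quot 2 _ p (-κ) 0 (p 0) 1 0 _ (by positivity) (fun t => ?_) ?_
  · rw [hF]; simp [Function.update]
  · field_simp; ring

lemma d0_330 (hp : ∀ i, 0 < p i) :
    pd 0 (tab κ 3 3 0) p = -κ * p 2 * (2 * p 0 + p 2) / (p 0 ^ 2 * (p 0 + p 2) ^ 2) := by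
  have h0 := hp 0
  have h2 := hp 2
  refine pd_quot 0 _ p (κ * p 2) 0 0 (p 2) 1 _ (by positivity) (fun t => ?_) ?_
  · simp [tab, Function.update]; ring
  · field_simp; ring

lemma d2_112 (hp : ∀ i, 0 < p i) :
    pd 2 (tab κ 1 1 2) p = -κ * p 0 * (2 * p 2 + p 0) / (p 2 ^ 2 * (p 0 + p 2) ^ 2) := by
  have h0 := hp 0
  have h2 := hp 2
  refine pd_quot 2 _ p (κ * p 0) 0 0 (p 0) 1 _ (by positivity) (fun t => ?_) ?_
  · simp [tab, Function.update]; ring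
  · field_simp; ring

lemma d1_b (i h : Fin 4) (hi : i = 1 ∨ i = 3) (hh : h ≠ i) : pd i (tab κ h h i) p = 0 := by
  apply tab_zero
  intro q
  rcases hi with rfl | rfl <;> fin_cases h <;> simp [tab] at hh ⊢

end derivs

set_option maxHeartbeats 4000000 in
lemma scalar_main (al : ℝ) (p : Fin 4 → ℝ) (hp : ∀ i, 0 < p i) :
    scalarCurv al p = -3 * (al ^ 2 - 1) / 2 := by
  rw [scalar_eq al p hp]
  simp only [Fin.sum_univ_four (f := fun j => ginv p j * _),
    Fin.sum_univ_four (f := fun h => riem al h h _ _ p), riem_diag]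
  simp only [riem_tab al _ _ _ _ p hp]
  have hal : al = 1 - 2 * ((1 - al) / 2) := by ring
  generalize (1 - al) / 2 = κ at *
  subst hal
  have z (i h j : Fin 4) (hz : ∀ q, tab κ h j j q = 0) := tab_zero κ i h j j p hz
  rw [d2_200 κ p hp, d0_022 κ p hp, d0_011 κ p hp, d2_211 κ p hp, d0_033 κ p hp, d2_233 κ p hp,
    d0_330 κ p hp, d2_112 κ p hp,
    d0_s κ p hp (tab κ 1 1 0) (fun q => by simp [tab]),
    d0_s κ p hp (tab κ 2 2 0) (fun q => by simp [tab]),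
    d2_s κ p hp (tab κ 0 0 2) (fun q => by simp [tab]),
    d2_s κ p hp (tab κ 3 3 2) (fun q => by simp [tab]),
    d1_b κ p 1 0 (by simp) (by simp), d1_b κ p 1 2 (by simp) (by simp),
    d1_b κ p 1 3 (by simp) (by simp),
    d1_b κ p 3 0 (by simp) (by simp), d1_b κ p 3 2 (by simp) (by simp),
    d1_b κ p 3 1 (by simp) (by simp),
    z 1 1 0 (fun q => by simp [tab]), z 3 3 0 (fun q => by simp [tab]),
    z 1 1 2 (fun q => by simp [tab]), z 3 3 2 (fun q => by simp [tab]),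
    z 1 1 3 (fun q => by simp [tab]), z 3 3 1 (fun q => by simp [tab])]
  have h0 := (hp 0).ne'
  have h1 := (hp 1).ne'
  have h2 := (hp 2).ne'
  have h3 := (hp 3).ne'
  have hs : p 0 + p 2 ≠ 0 := (add_pos (hp 0) (hp 2)).ne'
  simp [Fin.sum_univ_four, tab, ginv]
  field_simp
  ring

theorem freund_alpha_scalar_curvature (al : ℝ) (p : Fin 4 → ℝ) (hp : ∀ i, 0 < p i) :
    scalarCurv al p = -3 * (al ^ 2 - 1) / 2 ∧ scalarCurv 0 p = 3 / 2 := by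
  refine ⟨scalar_main al p hp, ?_⟩
  rw [scalar_main 0 p hp]
  norm_num
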